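/- Let A = ℂ² and for each p in P = ((ℕ∖{0})×ℤ) ∪ ({0}×ℕ) (the lexicographic positive cone of ℤ×ℤ) let E_p = ℂ² with left action φ_p(λ₁,λ₂) = (λ₁,λ₂) coordinatewise if p ∈ {0}×ℕ, and φ_p(λ₁,λ₂) = (λ₁,λ₁) otherwise; right action coordinatewise, multiplication μ_{p,q}((z₁,z₂)⊗(w₁,w₂)) = (z₁w₁, z₂w₂) if q ∈ {0}×ℕ and (z₁w₁, z₁w₂) otherwise. Then the multiplication maps are associative: μ_{pq,r}(μ_{p,q}(x⊗y)⊗z) = μ_{p,qr}(x⊗μ_{q,r}(y⊗z)) for all p,q,r ∈ P and x,y,z ∈ ℂ², and each μ_{p,q} intertwines the left actions: μ_{p,q}((φ_p(a)x)⊗y) = φ_{pq}(a)μ_{p,q}(x⊗y). -/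

import Mathlib

open scoped Classical

/-- The positive cone of `ℤ × ℤ` for the lexicographic order. -/
def lexConeP : Set (ℤ × ℤ) :=
  {x : ℤ × ℤ | (0 < x.1) ∨ (x.1 = 0 ∧ 0 ≤ x.2)}

/-- `S = {0} × ℕ` inside `ℤ × ℤ`. -/
def lexConeS : Set (ℤ × ℤ) :=
  {x : ℤ × ℤ | x.1 = 0 ∧ 0 ≤ x.2}

/-- The left action `φ_p` of `A = ℂ²` on `E_p = ℂ²`. -/
noncomputable def phiSY (p : ℤ × ℤ) (a : ℂ × ℂ) (x : ℂ × ℂ) : ℂ × ℂ :=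
  if p ∈ lexConeS then (a.1 * x.1, a.2 * x.2) else (a.1 * x.1, a.1 * x.2)

/-- The multiplication maps `μ_{p,q} : E_p ⊗ E_q → E_{pq}` (as bilinear maps `ℂ²×ℂ²→ℂ²`). -/
noncomputable def muSY (p q : ℤ × ℤ) (x y : ℂ × ℂ) : ℂ × ℂ :=
  if q ∈ lexConeS then (x.1 * y.1, x.2 * y.2) else (x.1 * y.1, x.1 * y.2)

theorem lexConeS_add_iff {p q : ℤ × ℤ} (hp : p ∈ lexConeP) (hq : q ∈ lexConeP) :
    p + q ∈ lexConeS ↔ p ∈ lexConeS ∧ q ∈ lexConeS := by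
  simp only [lexConeP, lexConeS, Set.mem_setOf_eq, Prod.fst_add, Prod.snd_add] at *
  omega

/-- For the Sims–Yeend product system over the lexicographic cone
`P = ((ℕ∖{0})×ℤ) ∪ ({0}×ℕ)` with fibres `E_p = ℂ²`, the multiplication maps are
associative and intertwine the left actions. -/
theorem simsYeend_product_system :
    (∀ p ∈ lexConeP, ∀ q ∈ lexConeP, ∀ r ∈ lexConeP, ∀ x y z : ℂ × ℂ,
        muSY (p + q) r (muSY p q x y) z = muSY p (q + r) x (muSY q r y z)) ∧
      ∀ p ∈ lexConeP, ∀ q ∈ lexConeP, ∀ a x y : ℂ × ℂ,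
        muSY p q (phiSY p a x) y = phiSY (p + q) a (muSY p q x y) := by
  constructor
  · intro p _ q hq r hr x y z
    have h := lexConeS_add_iff hq hr
    by_cases h1 : q ∈ lexConeS <;> by_cases h2 : r ∈ lexConeS <;>
      simp [muSY, h, h1, h2, mul_assoc]
  · intro p hp q hq a x y
    have h := lexConeS_add_iff hp hq
    by_cases h1 : p ∈ lexConeS <;> by_cases h2 : q ∈ lexConeS <;>
      simp [muSY, phiSY, h, h1, h2, mul_assoc]
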